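/- Let k be a field, n a natural number, and A and B noetherian k-algebras such that A ⊗_k B is noetherian. If A and B both satisfy the condition (C_n) and at least one of them satisfies Serre's condition (S_n), then A ⊗_k B satisfies the condition (C_n). -/

import Mathlib

/-!
Along a flat homomorphism of noetherian rings `R → S`, for a prime `Q` of `S` over `p`, the height
of `Q` is at most the sum of the height of `p` and the height of `Q` in the fibre `κ(p) ⊗ S`, while
its depth is at least the sum of the corresponding depths (a regular sequence of the closed fibre
lifts to `S` with flat quotient, which a regular sequence of `R` can then extend). Hence if the
depths in `R` fall short of `min n ht` by at most `c`, and those in the fibres by at most `c'`, then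
those in `S` fall short by at most `c + c'`.

The fibres of `A → A ⊗ B` over a field `k` are the rings `κ(p) ⊗ B`, so it suffices that extending
the base field does not increase the defect of `B`. Each prime of `L ⊗ B` is generated by finitely
many elements, hence is extended from `K ⊗ B` with `K / k` finitely generated. For such `K`, one
adjoins a transcendence basis and then the remaining algebraic elements: up to a localization, this
is a polynomial extension, whose fibres in one variable are principal ideal domains, followed by an
integral extension, whose fibres are zero-dimensional.
-/

noncomputable section

open TensorProduct

universe u v w

/-- The depth of the ideal `I` on the module `M`: the supremum of lengths of
`M`-regular sequences with entries in `I`. -/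
noncomputable def idealDepth (A : Type u) [CommRing A] (I : Ideal A)
    (M : Type v) [AddCommGroup M] [Module A M] : ℕ∞ :=
  sSup {n : ℕ∞ | ∃ rs : List A, (rs.length : ℕ∞) = n ∧ (∀ r ∈ rs, r ∈ I) ∧
    RingTheory.Sequence.IsRegular M rs}

/-- The depth of a module over a local ring. -/
noncomputable def localDepth (A : Type u) [CommRing A] [IsLocalRing A]
    (M : Type v) [AddCommGroup M] [Module A M] : ℕ∞ :=
  idealDepth A (IsLocalRing.maximalIdeal A) M

/-- The (Krull) dimension of a module, i.e. the Krull dimension of its support. -/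
noncomputable def supportDim (A : Type u) [CommRing A]
    (M : Type v) [AddCommGroup M] [Module A M] : WithBot ℕ∞ :=
  Order.krullDim (Module.support A M)

/-- `depth (M_P)` : the depth of the localization of `M` at a prime `P`,
over the local ring `A_P`. -/
noncomputable def depthAt (A : Type u) [CommRing A]
    (M : Type v) [AddCommGroup M] [Module A M] (P : PrimeSpectrum A) : ℕ∞ :=
  localDepth (Localization.AtPrime P.asIdeal) (LocalizedModule P.asIdeal.primeCompl M)

/-- `ht_M(P) = dim (M_P)` : the height of a prime `P` in the support of `M`,
i.e. the dimension of the localized module `M_P` over `A_P`. -/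
noncomputable def heightAt (A : Type u) [CommRing A]
    (M : Type v) [AddCommGroup M] [Module A M] (P : PrimeSpectrum A) : WithBot ℕ∞ :=
  supportDim (Localization.AtPrime P.asIdeal) (LocalizedModule P.asIdeal.primeCompl M)

/-- Serre's condition `(S_n)` for a module: for every `P` in the support,
`depth (M_P) ≥ min (n, ht_M(P))`. -/
def SerreCondS (A : Type u) [CommRing A] (n : ℕ)
    (M : Type v) [AddCommGroup M] [Module A M] : Prop :=
  ∀ P ∈ Module.support A M,
    min (n : WithBot ℕ∞) (heightAt A M P) ≤ (depthAt A M P : WithBot ℕ∞)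

/-- The condition `(C_n)` for a module: for every `P` in the support,
`depth (M_P) ≥ min (n, ht_M(P)) - 1`, equivalently
`min (n, ht_M(P)) ≤ depth (M_P) + 1`. -/
def CondC (A : Type u) [CommRing A] (n : ℕ)
    (M : Type v) [AddCommGroup M] [Module A M] : Prop :=
  ∀ P ∈ Module.support A M,
    min (n : WithBot ℕ∞) (heightAt A M P) ≤ (depthAt A M P : WithBot ℕ∞) + 1

/-- A module `M` is almost Cohen-Macaulay if `depth(P, M) = depth (M_P)` for every
`P` in the support of `M` (Kang's definition). -/
def IsAlmostCMModule (A : Type u) [CommRing A]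
    (M : Type v) [AddCommGroup M] [Module A M] : Prop :=
  ∀ P ∈ Module.support A M, idealDepth A P.asIdeal M = depthAt A M P

/-- A module `M` is Cohen-Macaulay if `depth (M_P) = dim (M_P)` for every `P` in its
support. -/
def IsCMModule (A : Type u) [CommRing A]
    (M : Type v) [AddCommGroup M] [Module A M] : Prop :=
  ∀ P ∈ Module.support A M, (depthAt A M P : WithBot ℕ∞) = heightAt A M P

/-- A ring is almost Cohen-Macaulay if it is an almost Cohen-Macaulay module over
itself. -/
abbrev IsAlmostCMRing (A : Type u) [CommRing A] : Prop := IsAlmostCMModule A A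

/-- A ring is Cohen-Macaulay if it is a Cohen-Macaulay module over itself, i.e. all its
localizations at primes have depth equal to dimension. -/
abbrev IsCMRing (A : Type u) [CommRing A] : Prop := IsCMModule A A

/-- A ring satisfies `(C_n)` if it does so as a module over itself. -/
abbrev RingCondC (A : Type u) [CommRing A] (n : ℕ) : Prop := CondC A n A

/-- A ring satisfies `(S_n)` if it does so as a module over itself. -/
abbrev RingSerreCondS (A : Type u) [CommRing A] (n : ℕ) : Prop := SerreCondS A n A

section Regularity

variable {R S N : Type*} [CommRing R] [CommRing S] [Algebra R S] [AddCommGroup N]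
  [Module R N] [Module S N] [IsScalarTower R S N] {y : S}

lemma isSMulRegular_tensorProduct_of_isTorsionBySet {m : Ideal R} [m.IsMaximal]
    (hy : IsSMulRegular (N ⊗[R] (R ⧸ m)) y) {M : Type*} [AddCommGroup M] [Module R M]
    (hM : Module.IsTorsionBySet R M m) : IsSMulRegular (N ⊗[R] M) y := by
  classical
  let : Field (R ⧸ m) := Ideal.Quotient.field m
  let : Module (R ⧸ m) M := hM.module
  have : IsScalarTower R (R ⧸ m) M := hM.isScalarTower
  let b := (Module.Basis.ofVectorSpace (R ⧸ m) M).repr.restrictScalars R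
  let e := AlgebraTensorModule.congr (LinearEquiv.refl S N) b ≪≫ₗ finsuppRight R S N (R ⧸ m) _
  rw [e.isSMulRegular_congr]
  exact fun f g h => Finsupp.ext fun i => hy (DFunLike.congr_fun h i)

lemma isSMulRegular_tensorProduct_of_isTorsionBySet_pow [Module.Flat R N] {m : Ideal R}
    [m.IsMaximal] (hy : IsSMulRegular (N ⊗[R] (R ⧸ m)) y) (k : ℕ) {M : Type*} [AddCommGroup M]
    [Module R M] (hM : Module.IsTorsionBySet R M (m ^ k : Ideal R)) :
    IsSMulRegular (N ⊗[R] M) y := by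
  induction k generalizing M with
  | zero =>
    have : Subsingleton M := subsingleton_of_forall_eq 0 fun x => by
      simpa using @hM x ⟨1, by simp⟩
    exact Function.injective_of_subsingleton _
  | succ k ih =>
    let M' : Submodule R M := m • ⊤
    have hsub : Module.IsTorsionBySet R M' (m ^ k : Ideal R) := by
      rintro ⟨x, hx⟩ ⟨a, ha⟩
      suffices a • x = 0 from Subtype.ext this
      refine Submodule.smul_induction_on hx (fun r hr z _ => ?_) fun z w hz hw => ?_
      · rw [smul_smul]
        exact @hM z ⟨a * r, pow_succ m k ▸ Ideal.mul_mem_mul ha hr⟩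
      · rw [smul_add, hz, hw, add_zero]
    refine isSMulRegular_of_range_eq_ker (f := AlgebraTensorModule.lTensor S N M'.subtype)
      (g := AlgebraTensorModule.lTensor S N M'.mkQ)
      (Module.Flat.lTensor_preserves_injective_linearMap _ M'.injective_subtype) ?_ (ih hsub)
      (isSMulRegular_tensorProduct_of_isTorsionBySet hy
        (Module.isTorsionBySet_quotient_ideal_smul M m))
    exact SetLike.coe_injective (Set.ext fun x =>
      (lTensor_exact N (LinearMap.exact_subtype_mkQ M') M'.mkQ_surjective x).symm)

lemma range_lTensor_subtype_smul_top_le (S : Type*) [CommRing S] [Algebra R S] [Module S N]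
    [IsScalarTower R S N] (M : Type*) [AddCommGroup M] [Module R M] (I : Ideal R) :
    LinearMap.range (AlgebraTensorModule.lTensor S N (I • ⊤ : Submodule R M).subtype) ≤
      I.map (algebraMap R S) • ⊤ := by
  have hmem (n : N) {x : M} (hx : x ∈ (I • ⊤ : Submodule R M)) :
      n ⊗ₜ[R] x ∈ (I.map (algebraMap R S) • ⊤ : Submodule S (N ⊗[R] M)) := by
    refine Submodule.smul_induction_on hx (fun r hr z _ => ?_) fun z w hz hw => ?_
    · rw [tmul_smul, ← algebraMap_smul S r]
      exact Submodule.smul_mem_smul (Ideal.mem_map_of_mem (algebraMap R S) hr) trivial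
    · rw [tmul_add]
      exact add_mem hz hw
  rintro _ ⟨w, rfl⟩
  induction w with
  | zero => simp
  | add v w hv hw => simpa only [map_add] using add_mem hv hw
  | tmul n x => exact hmem n x.2

/-- The `S`-linear isomorphism `(N ⊗[R] M) / y (N ⊗[R] M) ≃ (N / y N) ⊗[R] M` for `y : S`, where `S`
acts on the left factor. -/
def quotSMulTopTensorEquiv (y : S) (N : Type*) [AddCommGroup N] [Module R N] [Module S N]
    [IsScalarTower R S N] (M : Type*) [AddCommGroup M] [Module R M] :
    QuotSMulTop y (N ⊗[R] M) ≃ₗ[S] QuotSMulTop y N ⊗[R] M :=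
  QuotSMulTop.equivQuotTensor y _ ≪≫ₗ
    (AlgebraTensorModule.assoc R S S (S ⧸ Ideal.span {y}) N M).symm ≪≫ₗ
    AlgebraTensorModule.congr (QuotSMulTop.equivQuotTensor y N).symm (.refl R M)

lemma lTensor_comp_quotSMulTopTensorEquiv {M M' : Type*} [AddCommGroup M] [Module R M]
    [AddCommGroup M'] [Module R M'] (f : M →ₗ[R] M') :
    f.lTensor (QuotSMulTop y N) ∘ quotSMulTopTensorEquiv y N M =
      quotSMulTopTensorEquiv y N M' ∘ QuotSMulTop.map y (AlgebraTensorModule.lTensor S N f) := by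
  funext x
  obtain ⟨x, rfl⟩ := Submodule.mkQ_surjective _ x
  induction x with
  | zero => simp
  | add a b ha hb =>
    simp only [Function.comp_apply] at ha hb
    simp only [Function.comp_apply, map_add, ha, hb]
  | tmul n a => simp [quotSMulTopTensorEquiv, QuotSMulTop.equivQuotTensor]

lemma flat_quotSMulTop [Module.Flat R N] (hy : ∀ I : Ideal R, IsSMulRegular (N ⊗[R] (R ⧸ I)) y) :
    Module.Flat R (QuotSMulTop y N) := by
  rw [Module.Flat.iff_lTensor_injective']
  intro I
  let f := AlgebraTensorModule.lTensor S N I.subtype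
  have hf : Function.Injective f :=
    Module.Flat.lTensor_preserves_injective_linearMap _ I.injective_subtype
  have hzero : Function.Exact (0 : N ⊗[R] I →ₗ[S] N ⊗[R] I) f :=
    LinearMap.exact_zero_iff_injective _ _ |>.mpr hf
  have hexact := QuotSMulTop.map_first_exact_on_four_term_exact_of_isSMulRegular_last hzero
    (f₃ := AlgebraTensorModule.lTensor S N (Submodule.mkQ I))
    (lTensor_exact N (LinearMap.exact_subtype_mkQ I) (Submodule.mkQ_surjective I)) (hy I)
  have hinj : Function.Injective (QuotSMulTop.map y f) := by
    rw [map_zero] at hexact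
    exact (LinearMap.exact_zero_iff_injective _ _).mp hexact
  refine .of_comp_right (g := quotSMulTopTensorEquiv y N I) ?_ (LinearEquiv.surjective _)
  rw [lTensor_comp_quotSMulTopTensorEquiv]
  exact (LinearEquiv.injective _).comp hinj

variable [IsLocalRing R] [IsLocalRing S] [IsNoetherianRing S] [IsLocalHom (algebraMap R S)]
  [Module.Finite S N] [Module.Flat R N]

open IsLocalRing

lemma isSMulRegular_tensorProduct_of_quotient_maximalIdeal
    (hy : IsSMulRegular (N ⊗[R] (R ⧸ maximalIdeal R)) y) (M : Type*) [AddCommGroup M] [Module R M]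
    [Module.Finite R M] : IsSMulRegular (N ⊗[R] M) y := by
  refine .of_right_eq_zero_of_smul fun x hx => ?_
  have : Module.Finite S (N ⊗[R] M) :=
    .equiv (AlgebraTensorModule.cancelBaseChange R S S N M)
  let I := (maximalIdeal R).map (algebraMap R S)
  have hI : I ≠ ⊤ := ne_top_of_le_ne_top (maximalIdeal.isMaximal S).ne_top
    (((local_hom_TFAE (algebraMap R S)).out 0 2).mp ‹_›)
  rw [← Submodule.mem_bot S, ← Ideal.iInf_pow_smul_eq_bot_of_isLocalRing I hI, Submodule.mem_iInf]
  intro k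
  let M' : Submodule R M := maximalIdeal R ^ k • ⊤
  have hreg : IsSMulRegular (N ⊗[R] (M ⧸ M')) y :=
    isSMulRegular_tensorProduct_of_isTorsionBySet_pow hy k
      (Module.isTorsionBySet_quotient_ideal_smul M _)
  have hx0 : M'.mkQ.lTensor N x = 0 := hreg.right_eq_zero_of_smul <| by
    change y • AlgebraTensorModule.lTensor S N M'.mkQ x = 0
    rw [← map_smul, hx, map_zero]
  obtain ⟨w, rfl⟩ :=
    (lTensor_exact N (LinearMap.exact_subtype_mkQ M') M'.mkQ_surjective x).mp hx0
  rw [← Ideal.map_pow]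
  exact range_lTensor_subtype_smul_top_le S M _ ⟨w, rfl⟩

lemma isSMulRegular_of_quotient_maximalIdeal
    (hy : IsSMulRegular (N ⊗[R] (R ⧸ maximalIdeal R)) y) : IsSMulRegular N y :=
  ((AlgebraTensorModule.rid R S N).isSMulRegular_congr y).mp
    (isSMulRegular_tensorProduct_of_quotient_maximalIdeal hy R)

lemma flat_quotSMulTop_of_quotient_maximalIdeal
    (hy : IsSMulRegular (N ⊗[R] (R ⧸ maximalIdeal R)) y) : Module.Flat R (QuotSMulTop y N) :=
  flat_quotSMulTop fun I => isSMulRegular_tensorProduct_of_quotient_maximalIdeal hy (R ⧸ I)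

open RingTheory.Sequence

lemma isWeaklyRegular_and_flat_quotient {ys : List S}
    (h : IsWeaklyRegular (N ⊗[R] (R ⧸ maximalIdeal R)) ys) :
    IsWeaklyRegular N ys ∧ Module.Flat R (N ⧸ (Ideal.ofList ys • ⊤ : Submodule S N)) := by
  induction ys generalizing N with
  | nil =>
    have hbot : (Ideal.ofList ([] : List S) • ⊤ : Submodule S N) = ⊥ := by
      rw [Ideal.ofList_nil, Submodule.bot_smul]
    exact ⟨.nil S N, .of_linearEquiv ((Submodule.quotEquivOfEqBot _ hbot).restrictScalars R)⟩
  | cons y ys ih =>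
    rw [isWeaklyRegular_cons_iff] at h
    have := flat_quotSMulTop_of_quotient_maximalIdeal h.1
    obtain ⟨hreg, hflat⟩ :=
      ih (((quotSMulTopTensorEquiv y N _).isWeaklyRegular_congr ys).mp h.2)
    let e := Submodule.quotOfListConsSMulTopEquivQuotSMulTopInner N y ys
    exact ⟨(isWeaklyRegular_cons_iff N y ys).mpr ⟨isSMulRegular_of_quotient_maximalIdeal h.1, hreg⟩,
      .of_linearEquiv (e.restrictScalars R)⟩

end Regularity

section Depth

open IsLocalRing RingTheory.Sequence

lemma length_le_localDepth {R M : Type*} [CommRing R] [IsLocalRing R] [AddCommGroup M] [Module R M]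
    {rs : List R} (hrs : ∀ r ∈ rs, r ∈ maximalIdeal R) (h : IsRegular M rs) :
    (rs.length : ℕ∞) ≤ localDepth R M :=
  le_sSup ⟨rs, rfl, hrs, h⟩

lemma localDepth_eq_of_surjective {R S M N : Type*} [CommRing R] [CommRing S] [IsLocalRing R]
    [IsLocalRing S] [AddCommGroup M] [Module R M] [AddCommGroup N] [Module S N] {f : R →+* S}
    (hf : Function.Surjective f) (e : M ≃+ N) (he : ∀ (r : R) (x : M), e (r • x) = f r • e x) :
    localDepth R M = localDepth S N := by
  have : IsLocalHom f := hf.isLocalHom f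
  have hreg (rs : List R) : IsRegular M rs ↔ IsRegular N (rs.map f) :=
    e.isRegular_congr (List.forall₂_map_right_iff.mpr (List.forall₂_same.mpr fun r _ => he r))
  refine le_antisymm (sSup_le ?_) (sSup_le ?_)
  · rintro _ ⟨rs, rfl, hrs, h⟩
    rw [← List.length_map f]
    exact length_le_localDepth
      (List.forall_mem_map.mpr fun r hr => map_nonunit f r (hrs r hr)) ((hreg rs).mp h)
  · rintro _ ⟨ss, rfl, hss, h⟩
    obtain ⟨rs, rfl⟩ := List.map_surjective_iff.mpr hf ss
    rw [List.length_map]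
    exact length_le_localDepth
      (fun r hr hu => hss _ (List.mem_map_of_mem hr) (hu.map f)) ((hreg rs).mpr h)

lemma localDepth_eq_of_ringEquiv {R S : Type*} [CommRing R] [CommRing S] [IsLocalRing R]
    [IsLocalRing S] (e : R ≃+* S) : localDepth R R = localDepth S S :=
  localDepth_eq_of_surjective (f := (e : R →+* S)) e.surjective e.toAddEquiv (map_mul e)

section Flat

variable {R S : Type*} [CommRing R] [IsLocalRing R] [CommRing S] [IsLocalRing S]
  [IsNoetherianRing S] [Algebra R S] [IsLocalHom (algebraMap R S)] [Module.Flat R S]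

lemma length_add_length_le_localDepth {rs : List R} (hrs : ∀ r ∈ rs, r ∈ maximalIdeal R)
    (hR : IsWeaklyRegular R rs) {ys : List S} (hys : ∀ y ∈ ys, y ∈ maximalIdeal S)
    (hF : IsWeaklyRegular (S ⧸ (maximalIdeal R).map (algebraMap R S)) ys) :
    (rs.length : ℕ∞) + ys.length ≤ localDepth S S := by
  have hF' : IsWeaklyRegular (S ⊗[R] (R ⧸ maximalIdeal R)) ys :=
    ((Algebra.TensorProduct.quotIdealMapEquivTensorQuot S
      (maximalIdeal R)).toLinearEquiv.isWeaklyRegular_congr ys).mp hF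
  obtain ⟨hS, hflat⟩ := isWeaklyRegular_and_flat_quotient hF'
  -- `S ⧸ (ys)` is still flat over `R`, so that regular sequences of `R` remain regular on it
  have hquot : IsWeaklyRegular (S ⧸ (Ideal.ofList ys • ⊤ : Ideal S))
      (rs.map (algebraMap R S)) := by
    rw [isWeaklyRegular_map_algebraMap_iff]
    exact ((TensorProduct.lid R _).isWeaklyRegular_congr rs).mp hR.isWeaklyRegular_rTensor
  have hmem : ∀ s ∈ ys ++ rs.map (algebraMap R S), s ∈ maximalIdeal S := by
    simp only [List.forall_mem_append, List.forall_mem_map]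
    exact ⟨hys, fun r hr => map_nonunit (algebraMap R S) r (hrs r hr)⟩
  have hreg : IsRegular S (ys ++ rs.map (algebraMap R S)) :=
    .of_isWeaklyRegular_of_mem_maximalIdeal _ hmem
      ((isWeaklyRegular_append_iff _ _ _).mpr ⟨hS, hquot⟩)
  calc (rs.length : ℕ∞) + ys.length = (ys ++ rs.map (algebraMap R S)).length := by
        simp [add_comm]
    _ ≤ localDepth S S := length_le_localDepth hmem hreg

lemma localDepth_add_le_of_flat :
    localDepth R R + localDepth S (S ⧸ (maximalIdeal R).map (algebraMap R S)) ≤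
      localDepth S S := by
  have : Nontrivial (S ⧸ (maximalIdeal R).map (algebraMap R S)) :=
    Ideal.Quotient.nontrivial_iff.mpr (ne_top_of_le_ne_top (maximalIdeal.isMaximal S).ne_top
      (((local_hom_TFAE (algebraMap R S)).out 0 2).mp ‹_›))
  rw [localDepth, localDepth, idealDepth, idealDepth, sSup_eq_iSup, sSup_eq_iSup]
  refine ENat.biSup_add_biSup_le ?_ ?_ ?_
  · exact ⟨0, [], by simp, by simp, .nil _ _⟩
  · exact ⟨0, [], by simp, by simp, .nil _ _⟩
  · rintro _ ⟨rs, rfl, hrs, hR⟩ _ ⟨ys, rfl, hys, hF⟩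
    exact length_add_length_le_localDepth hrs hR.1 hys hF.1

end Flat

end Depth

section KrullDim

open IsLocalRing

lemma ringKrullDim_le_add_of_isLocalHom (R S : Type*) [CommRing R] [IsLocalRing R]
    [IsNoetherianRing R] [CommRing S] [IsLocalRing S] [IsNoetherianRing S] [Algebra R S]
    [IsLocalHom (algebraMap R S)] :
    ringKrullDim S ≤ ringKrullDim R + ringKrullDim (S ⧸ (maximalIdeal R).map (algebraMap R S)) := by
  let I := (maximalIdeal R).map (algebraMap R S)
  have hI : RingHom.ker (Ideal.Quotient.mk I) ≤ maximalIdeal S :=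
    I.mk_ker.trans_le (((local_hom_TFAE (algebraMap R S)).out 0 2).mp ‹_›)
  have := Ideal.map_isPrime_of_surjective Ideal.Quotient.mk_surjective hI
  calc ringKrullDim S = (maximalIdeal S).height := maximalIdeal_height_eq_ringKrullDim.symm
    _ ≤ (maximalIdeal R).height + ((maximalIdeal S).map (Ideal.Quotient.mk I)).height :=
      mod_cast Ideal.height_le_height_add_of_liesOver (maximalIdeal R) (maximalIdeal S)
    _ ≤ ringKrullDim R + ringKrullDim (S ⧸ I) :=
      add_le_add maximalIdeal_height_eq_ringKrullDim.le Ideal.height_le_ringKrullDim_of_isPrime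

end KrullDim

section PrimeDepth

open IsLocalRing RingTheory.Sequence

/-- The depth of the local ring of `R` at a prime ideal `p`. -/
def primeDepth {R : Type*} [CommRing R] (p : Ideal R) [p.IsPrime] : ℕ∞ :=
  localDepth (Localization.AtPrime p) (Localization.AtPrime p)

lemma primeDepth_comap_ringEquiv {R S : Type*} [CommRing R] [CommRing S] (e : R ≃+* S)
    (q : Ideal S) [q.IsPrime] : primeDepth (q.comap e) = primeDepth q :=
  localDepth_eq_of_ringEquiv (Localization.localRingEquiv _ q e rfl)

lemma one_le_primeDepth {R : Type*} [CommRing R] [IsDomain R] {p : Ideal R} [p.IsPrime]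
    (hp : p ≠ ⊥) : 1 ≤ primeDepth p := by
  obtain ⟨x, hx, hx0⟩ := Submodule.exists_mem_ne_zero_of_ne_bot hp
  let y := algebraMap R (Localization.AtPrime p) x
  have hy : y ∈ maximalIdeal (Localization.AtPrime p) :=
    (IsLocalization.AtPrime.to_map_mem_maximal_iff _ p x).mpr hx
  have hy0 : y ≠ 0 := by rwa [Ne, FaithfulSMul.algebraMap_eq_zero_iff]
  have := IsLocalization.isDomain_localization p.primeCompl_le_nonZeroDivisors
  have hreg : IsRegular (Localization.AtPrime p) [y] :=
    .of_isWeaklyRegular_of_mem_maximalIdeal _ (by simpa using hy)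
      ((isWeaklyRegular_singleton_iff _ y).mpr (IsLeftRegular.isSMulRegular
        (IsLeftCancelMulZero.mul_left_cancel_of_ne_zero hy0)))
  simpa using! length_le_localDepth (by simpa using hy) hreg

section Fiber

open Algebra.TensorProduct

variable {R S : Type*} [CommRing R] [CommRing S] [Algebra R S] (p : Ideal R) [p.IsPrime]
  (q : Ideal (p.Fiber S)) [q.IsPrime]

/-- The local ring of the fibre `p.Fiber S = κ(p) ⊗[R] S` at `q` is the fibre over the maximal ideal
of the local homomorphism `R_p → S_Q`, where `Q` is the preimage of `q`. -/
def localizationFiberEquiv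
    [Algebra (Localization.AtPrime p) (Localization.AtPrime (q.comap includeRight))]
    [Localization.AtPrime.IsLiesOverAlgebra p (q.comap includeRight)] :
    Localization.AtPrime q ≃+* Localization.AtPrime (q.comap includeRight) ⧸
      (maximalIdeal (Localization.AtPrime p)).map (algebraMap (Localization.AtPrime p)
        (Localization.AtPrime (q.comap includeRight))) :=
  (Ideal.Fiber.localizationAlgEquivQuotient p q).toRingEquiv.trans <| Ideal.quotEquivOfEq <| by
    rw [← Localization.AtPrime.map_eq_maximalIdeal, Ideal.map_map, ← IsScalarTower.algebraMap_eq]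

lemma primeDepth_add_primeDepth_le_of_flat [IsNoetherianRing S] [Module.Flat R S] :
    primeDepth p + primeDepth q ≤ primeDepth (q.comap includeRight) := by
  let := Localization.AtPrime.algebraOfLiesOver p (q.comap includeRight)
  have : IsLocalHom (algebraMap (Localization.AtPrime p)
      (Localization.AtPrime (q.comap includeRight))) :=
    Localization.isLocalHom_localRingHom p _ (algebraMap R S) _
  let e := localizationFiberEquiv p q
  have he : primeDepth q = localDepth (Localization.AtPrime (q.comap includeRight)) _ :=
    .symm <| localDepth_eq_of_surjective (f := e.symm.toRingHom.comp (Ideal.Quotient.mk _))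
      (e.symm.surjective.comp Ideal.Quotient.mk_surjective) e.symm.toAddEquiv
      fun r x => map_mul e.symm (Ideal.Quotient.mk _ r) x
  rw [he]
  exact localDepth_add_le_of_flat

lemma height_comap_includeRight_le [IsNoetherianRing R] [IsNoetherianRing S] :
    (q.comap includeRight).height ≤ p.height + q.height := by
  let := Localization.AtPrime.algebraOfLiesOver p (q.comap includeRight)
  have : IsLocalHom (algebraMap (Localization.AtPrime p)
      (Localization.AtPrime (q.comap includeRight))) :=
    Localization.isLocalHom_localRingHom p _ (algebraMap R S) _
  rw [← WithBot.coe_le_coe, WithBot.coe_add,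
    ← IsLocalization.AtPrime.ringKrullDim_eq_height p (Localization.AtPrime p),
    ← IsLocalization.AtPrime.ringKrullDim_eq_height q (Localization.AtPrime q),
    ringKrullDim_eq_of_ringEquiv (localizationFiberEquiv p q),
    ← IsLocalization.AtPrime.ringKrullDim_eq_height
      (q.comap includeRight) (Localization.AtPrime (q.comap includeRight))]
  exact ringKrullDim_le_add_of_isLocalHom _ _

end Fiber

end PrimeDepth

section DepthDefect

open Algebra.TensorProduct

/-- `R` has depth defect at most `c` up to level `n`: every local ring `R_p` has depth at least
`min n (ht p) - c`, with the subtraction moved to the other side. Serre's condition `(S_n)` is the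
case `c = 0` and the condition `(C_n)` is the case `c = 1`; stating both with a parameter `c` makes
the defects add up along flat homomorphisms. -/
def DepthDefectLE (R : Type*) [CommRing R] (n c : ℕ∞) : Prop :=
  ∀ (p : Ideal R) [p.IsPrime], min n p.height ≤ primeDepth p + c

variable {R S : Type*} [CommRing R] [CommRing S] {n c c' : ℕ∞}

lemma min_add_le_min_add_min (n a b : ℕ∞) : min n (a + b) ≤ min n a + min n b := by
  rcases le_total n a with ha | ha
  · rw [min_eq_left ha]
    exact (min_le_left _ _).trans le_self_add
  rcases le_total n b with hb | hb
  · rw [min_eq_left hb]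
    exact (min_le_left _ _).trans le_add_self
  · rw [min_eq_right ha, min_eq_right hb]
    exact min_le_right _ _

lemma exists_comap_includeRight_eq [Algebra R S] (p : Ideal R) [p.IsPrime] (Q : Ideal S)
    [Q.IsPrime] [Q.LiesOver p] :
    ∃ (q : Ideal (p.Fiber S)) (_ : q.IsPrime), q.comap includeRight = Q := by
  obtain ⟨q, hq⟩ := (PrimeSpectrum.primesOverOrderIsoFiber R S p).symm.surjective
    (Ideal.primesOver.mk p Q)
  exact ⟨q.asIdeal, q.isPrime, congrArg Subtype.val hq⟩

lemma height_eq_zero_of_isIntegral (K : Type*) [Field K] [Algebra K S] [Algebra.IsIntegral K S]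
    (q : Ideal S) [q.IsPrime] : q.height = 0 := by
  simpa [Ideal.height_eq_zero_iff, minimalPrimes, Ideal.eq_bot_of_prime (q.under K)] using
    Ideal.IsIntegral.mem_minimalPrimes_map_under (R := K) q

lemma primeDepth_under_of_isLocalization [Algebra R S] (M : Submonoid R) [IsLocalization M S]
    (q : Ideal S) [q.IsPrime] : primeDepth (q.under R) = primeDepth q := by
  have := IsLocalization.isLocalization_isLocalization_atPrime_isLocalization M
    (Localization.AtPrime q) q
  exact localDepth_eq_of_ringEquiv (IsLocalization.algEquiv (q.under R).primeCompl
    (Localization.AtPrime (q.under R)) (Localization.AtPrime q)).toRingEquiv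

namespace DepthDefectLE

lemma of_ringEquiv (h : DepthDefectLE R n c) (e : R ≃+* S) : DepthDefectLE S n c := fun q _ => by
  rw [← primeDepth_comap_ringEquiv e q, ← e.height_comap q]
  exact h _

lemma of_flat [IsNoetherianRing R] [IsNoetherianRing S] [Algebra R S] [Module.Flat R S]
    (hR : DepthDefectLE R n c) (hS : ∀ (p : Ideal R) [p.IsPrime], DepthDefectLE (p.Fiber S) n c') :
    DepthDefectLE S n (c + c') := by
  intro Q _
  obtain ⟨p, _, _⟩ : ∃ p : Ideal R, p.IsPrime ∧ Q.LiesOver p :=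
    ⟨Q.under R, inferInstance, inferInstance⟩
  obtain ⟨q, _, rfl⟩ := exists_comap_includeRight_eq p Q
  calc min n (q.comap includeRight).height
    _ ≤ min n (p.height + q.height) := by
      gcongr
      exact height_comap_includeRight_le p q
    _ ≤ min n p.height + min n q.height := min_add_le_min_add_min _ _ _
    _ ≤ (primeDepth p + c) + (primeDepth q + c') := add_le_add (hR p) (hS p q)
    _ = (primeDepth p + primeDepth q) + (c + c') := add_add_add_comm _ _ _ _
    _ ≤ _ := by
      gcongr
      exact primeDepth_add_primeDepth_le_of_flat p q

lemma of_isLocalization [Algebra R S] (M : Submonoid R) [IsLocalization M S]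
    (h : DepthDefectLE R n c) : DepthDefectLE S n c := fun q _ => by
  rw [← primeDepth_under_of_isLocalization M q, ← IsLocalization.height_under M q]
  exact h _

lemma of_isIntegral [IsNoetherianRing R] [IsNoetherianRing S] [Algebra R S] [Module.Flat R S]
    [Algebra.IsIntegral R S] (h : DepthDefectLE R n c) : DepthDefectLE S n c := by
  simpa using h.of_flat (c' := 0) fun p _ q _ => by
    simp [height_eq_zero_of_isIntegral p.ResidueField q]

lemma of_isPrincipalIdealRing (R : Type*) [CommRing R] [IsDomain R] [IsPrincipalIdealRing R]
    (n : ℕ∞) : DepthDefectLE R n 0 := by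
  intro p _
  rw [add_zero]
  refine inf_le_right.trans ?_
  obtain rfl | hp := eq_or_ne p ⊥
  · simp
  · exact (Ideal.height_le_one_of_isPrincipal_of_mem_minimalPrimes p p
      (by simp [Ideal.minimalPrimes_eq_subsingleton_self])).trans (one_le_primeDepth hp)

open Polynomial in
lemma polynomial [IsNoetherianRing R] (h : DepthDefectLE R n c) : DepthDefectLE R[X] n c := by
  simpa using h.of_flat (S := R[X]) (c' := 0) fun p _ =>
    (of_isPrincipalIdealRing p.ResidueField[X] n).of_ringEquiv
      (polyEquivTensor R p.ResidueField).toRingEquiv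

lemma mvPolynomial [IsNoetherianRing R] (h : DepthDefectLE R n c) (σ : Type*) [Finite σ] :
    DepthDefectLE (MvPolynomial σ R) n c := by
  induction σ using Finite.induction_empty_option with
  | of_equiv e h => exact h.of_ringEquiv (MvPolynomial.renameEquiv R e).toRingEquiv
  | h_empty => exact h.of_ringEquiv (MvPolynomial.isEmptyRingEquiv R PEmpty).symm
  | h_option h =>
    exact h.polynomial.of_ringEquiv (MvPolynomial.optionEquivLeft R _).symm.toRingEquiv

end DepthDefectLE

end DepthDefect

section FieldBaseChange

open Algebra.TensorProduct

lemma isNoetherianRing_tensorProduct (R S A : Type*) [CommRing R] [CommRing S] [CommRing A]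
    [Algebra R S] [Algebra R A] [IsNoetherianRing A] [Algebra.EssFiniteType R S] :
    IsNoetherianRing (S ⊗[R] A) :=
  have := Algebra.EssFiniteType.isNoetherianRing A (A ⊗[R] S)
  isNoetherianRing_of_ringEquiv (A ⊗[R] S) (Algebra.TensorProduct.comm R A S).toRingEquiv

lemma exists_intermediateField_fg_map_comap_eq {k L A : Type*} [Field k] [Field L] [CommRing A]
    [Algebra k L] [Algebra k A] {I : Ideal (L ⊗[k] A)} (hI : I.FG) :
    ∃ K : IntermediateField k L, K.FG ∧
      (I.comap (map K.val (.id k A))).map (map K.val (.id k A)) = I := by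
  obtain ⟨s, rfl⟩ := hI
  obtain ⟨M, hM, hs⟩ :=
    TensorProduct.exists_finite_submodule_left_of_setFinite (s : Set (L ⊗[k] A)) s.finite_toSet
  obtain ⟨t, rfl⟩ := Module.Finite.iff_fg.mp hM
  let K := IntermediateField.adjoin k (t : Set L)
  have ht : Submodule.span k (t : Set L) ≤ Subalgebra.toSubmodule K.toSubalgebra :=
    Submodule.span_le.mpr (IntermediateField.subset_adjoin k _)
  refine ⟨K, IntermediateField.fg_adjoin_finset t,
    le_antisymm Ideal.map_comap_le (Ideal.span_le.mpr fun y hy => ?_)⟩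
  obtain ⟨z, rfl⟩ := hs hy
  have hz : map K.val (.id k A) ((Submodule.inclusion ht).rTensor A z) =
      (Submodule.span k (t : Set L)).subtype.rTensor A z :=
    (LinearMap.rTensor_comp_apply A K.val.toLinearMap (Submodule.inclusion ht) z).symm
  rw [← hz]
  refine Ideal.mem_map_of_mem _ (Ideal.mem_comap.mpr ?_)
  rw [hz]
  exact Ideal.subset_span hy

namespace DepthDefectLE

variable {n c : ℕ∞}

lemma min_height_le_of_map_under_eq {R S : Type*} [CommRing R] [CommRing S] [IsNoetherianRing R]
    [IsNoetherianRing S] [Algebra R S] [Module.Flat R S] (h : DepthDefectLE R n c) {Q : Ideal S}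
    [Q.IsPrime] (hQ : (Q.under R).map (algebraMap R S) = Q) :
    min n Q.height ≤ primeDepth Q + c := by
  have hheight : Q.height ≤ (Q.under R).height := by
    have h := Ideal.height_le_height_add_of_liesOver (Q.under R) Q
    rwa [hQ, Ideal.map_quotient_self, Ideal.height_bot, add_zero] at h
  have hdepth : primeDepth (Q.under R) ≤ primeDepth Q := by
    obtain ⟨p, hp, _, _⟩ : ∃ p : Ideal R, Q.under R = p ∧ p.IsPrime ∧ Q.LiesOver p :=
      ⟨Q.under R, rfl, inferInstance, inferInstance⟩
    obtain ⟨q, _, rfl⟩ := exists_comap_includeRight_eq p Q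
    simp only [hp]
    exact le_self_add.trans (primeDepth_add_primeDepth_le_of_flat p q)
  calc min n Q.height ≤ min n (Q.under R).height := min_le_min_left n hheight
    _ ≤ primeDepth (Q.under R) + c := h _
    _ ≤ primeDepth Q + c := by gcongr

section BaseChange

variable {R A : Type*} (S : Type*) [CommRing R] [CommRing S] [CommRing A] [Algebra R S]
  [Algebra R A]

lemma baseChange_of_isLocalization (h : DepthDefectLE A n c) (M : Submonoid R)
    [IsLocalization M S] : DepthDefectLE (S ⊗[R] A) n c :=
  (h.of_isLocalization (S := A ⊗[R] S) (Algebra.algebraMapSubmonoid A M)).of_ringEquiv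
    (Algebra.TensorProduct.comm R A S).toRingEquiv

lemma baseChange_of_isIntegral [IsNoetherianRing A] [Module.Flat R S] [Algebra.IsIntegral R S]
    [Algebra.EssFiniteType R S] (h : DepthDefectLE A n c) : DepthDefectLE (S ⊗[R] A) n c :=
  have := Algebra.EssFiniteType.isNoetherianRing A (A ⊗[R] S)
  (h.of_isIntegral (S := A ⊗[R] S)).of_ringEquiv (Algebra.TensorProduct.comm R A S).toRingEquiv

end BaseChange

variable {k A : Type*} [Field k] [CommRing A] [Algebra k A] [IsNoetherianRing A]

open IntermediateField.algebraAdjoinAdjoin in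
lemma baseChange_of_essFiniteType (L : Type*) [Field L] [Algebra k L] [Algebra.EssFiniteType k L]
    (h : DepthDefectLE A n c) : DepthDefectLE (L ⊗[k] A) n c := by
  obtain ⟨ι, x, hx⟩ := exists_isTranscendenceBasis' k L
  have := finite_of_isTranscendenceBasis hx
  have hpoly : DepthDefectLE (Algebra.adjoin k (Set.range x) ⊗[k] A) n c :=
    (h.mvPolynomial ι).of_ringEquiv <|
      (MvPolynomial.algebraTensorAlgEquiv k A).symm.toRingEquiv.trans <|
        ((Algebra.TensorProduct.comm k A (MvPolynomial ι k)).trans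
          (congr hx.1.aevalEquiv .refl)).toRingEquiv
  let F := IntermediateField.adjoin k (Set.range x)
  have hfrac : DepthDefectLE (F ⊗[k] A) n c :=
    (hpoly.baseChange_of_isLocalization F (nonZeroDivisors _)).of_ringEquiv
      (cancelBaseChange k _ F F A).toRingEquiv
  have : Algebra.IsAlgebraic F L := hx.isAlgebraic_field
  have : Algebra.EssFiniteType k F :=
    IntermediateField.essFiniteType_iff.mpr
      (IntermediateField.fg_adjoin_of_finite (Set.finite_range x))
  have := Algebra.EssFiniteType.of_comp k F L
  have := isNoetherianRing_tensorProduct k F A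
  exact (hfrac.baseChange_of_isIntegral (R := F) L).of_ringEquiv
    (cancelBaseChange k F F L A).toRingEquiv

lemma baseChange (L : Type*) [Field L] [Algebra k L] [IsNoetherianRing (L ⊗[k] A)]
    (h : DepthDefectLE A n c) : DepthDefectLE (L ⊗[k] A) n c := by
  intro Q _
  obtain ⟨K, hK, hQ⟩ := exists_intermediateField_fg_map_comap_eq (IsNoetherian.noetherian Q)
  have := IntermediateField.essFiniteType_iff.mpr hK
  have := isNoetherianRing_tensorProduct k K A
  let := (map K.val (.id k A)).toAlgebra
  have : Module.Flat (K ⊗[k] A) (L ⊗[k] A) :=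
    RingHom.Flat.tensorProductMap (f := K.val) (g := .id k A)
      (RingHom.flat_algebraMap_iff.mpr inferInstance) (.id A)
  exact (h.baseChange_of_essFiniteType K).min_height_le_of_map_under_eq hQ

lemma tensorProduct {B : Type*} [CommRing B] [Algebra k B] [IsNoetherianRing B]
    [IsNoetherianRing (A ⊗[k] B)] {c' : ℕ∞} (hA : DepthDefectLE A n c)
    (hB : DepthDefectLE B n c') : DepthDefectLE (A ⊗[k] B) n (c + c') :=
  hA.of_flat fun p _ => by
    have := isNoetherianRing_tensorProduct A p.ResidueField (A ⊗[k] B)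
    let e : p.Fiber (A ⊗[k] B) ≃+* p.ResidueField ⊗[k] B :=
      (cancelBaseChange k A A p.ResidueField B).toRingEquiv
    have := isNoetherianRing_of_ringEquiv _ e
    exact (hB.baseChange p.ResidueField).of_ringEquiv e.symm

end DepthDefectLE

end FieldBaseChange

section SerreCondition

variable {R : Type*} [CommRing R]

/-- The localization of the `R`-module `R` at `P` is the local ring `R_P`, linearly over `R_P`; this
identifies the module-theoretic depth and height of `R` with those of its local rings. -/
def localizedModuleSelfEquiv (P : PrimeSpectrum R) :
    LocalizedModule P.asIdeal.primeCompl R ≃ₗ[Localization.AtPrime P.asIdeal]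
      Localization.AtPrime P.asIdeal :=
  (IsLocalizedModule.iso P.asIdeal.primeCompl
    (Algebra.linearMap R (Localization.AtPrime P.asIdeal))).extendScalarsOfIsLocalization
      P.asIdeal.primeCompl (Localization.AtPrime P.asIdeal)

lemma depthAt_self (P : PrimeSpectrum R) : depthAt R R P = primeDepth P.asIdeal :=
  localDepth_eq_of_surjective (f := .id _) Function.surjective_id
    (localizedModuleSelfEquiv P).toAddEquiv (localizedModuleSelfEquiv P).map_smul

lemma heightAt_self (P : PrimeSpectrum R) : heightAt R R P = P.asIdeal.height :=
  calc heightAt R R P = ringKrullDim (Localization.AtPrime P.asIdeal) :=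
        (Module.supportDim_eq_of_equiv (localizedModuleSelfEquiv P)).trans
          (Module.supportDim_self_eq_ringKrullDim _)
    _ = P.asIdeal.height := IsLocalization.AtPrime.ringKrullDim_eq_height P.asIdeal _

lemma forall_mem_support_self_iff {n c : ℕ} :
    (∀ P ∈ Module.support R R,
      min (n : WithBot ℕ∞) (heightAt R R P) ≤ (depthAt R R P : WithBot ℕ∞) + c) ↔
      DepthDefectLE R n c := by
  have hmem (P : PrimeSpectrum R) : P ∈ Module.support R R := by
    simp [Module.mem_support_iff_of_finite, Module.annihilator_eq_bot.mpr]
  refine ⟨fun h p hp => ?_, fun h P _ => ?_⟩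
  · have := h ⟨p, hp⟩ (hmem _)
    rw [heightAt_self, depthAt_self] at this
    exact_mod_cast this
  · rw [heightAt_self, depthAt_self]
    exact_mod_cast h P.asIdeal

lemma ringSerreCondS_iff {n : ℕ} : RingSerreCondS R n ↔ DepthDefectLE R n 0 := by
  simpa [SerreCondS] using forall_mem_support_self_iff (R := R) (n := n) (c := 0)

lemma ringCondC_iff {n : ℕ} : RingCondC R n ↔ DepthDefectLE R n 1 := by
  simpa [CondC] using forall_mem_support_self_iff (R := R) (n := n) (c := 1)

end SerreCondition

theorem tensor_condC_of_condC_and_serreS (k : Type u) [Field k] (n : ℕ)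
    (A : Type v) (B : Type w) [CommRing A] [CommRing B] [Algebra k A] [Algebra k B]
    [IsNoetherianRing A] [IsNoetherianRing B] [IsNoetherianRing (A ⊗[k] B)]
    (hA : RingCondC A n) (hB : RingCondC B n)
    (hS : RingSerreCondS A n ∨ RingSerreCondS B n) :
    RingCondC (A ⊗[k] B) n := by
  rw [ringCondC_iff] at hA hB ⊢
  rw [ringSerreCondS_iff, ringSerreCondS_iff] at hS
  rcases hS with hS | hS
  · simpa only [zero_add] using hS.tensorProduct hB
  · simpa only [add_zero] using hA.tensorProduct hS

end
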